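/- Under Assumptions 1, 2 and 3, the second-moment decay rate R_Q(B) = lim_{n→∞} −(1/n) log E_{Q_n}[L_n² 1_{M_n∈B}] exists, is finite, and is given by R_Q(B) = inf_{(m,w)∈B×ℝ} {w + J_P(m,w)} = inf_{(m,w)∈B×ℝ} {2w + J_Q(m,w)} (Lemma 1). -/

import Mathlib

open MeasureTheory Filter Set Topology
open scoped ENNReal NNReal

/-- A sequence of measures satisfies the large deviation principle with rate function `I`:
upper bound over closed sets and lower bound over open sets, at exponential speed `n`. -/
def SatisfiesLDP {X : Type*} [TopologicalSpace X] [MeasurableSpace X]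
    (mu : ℕ → Measure X) (I : X → ℝ≥0∞) : Prop :=
  (∀ F : Set X, IsClosed F →
      limsup (fun n : ℕ => (((n : ℝ)⁻¹ : ℝ) : EReal) * ENNReal.log (mu n F)) atTop
        ≤ -(⨅ x ∈ F, (I x : EReal))) ∧
  (∀ G : Set X, IsOpen G →
      -(⨅ x ∈ G, (I x : EReal)) ≤
        liminf (fun n : ℕ => (((n : ℝ)⁻¹ : ℝ) : EReal) * ENNReal.log (mu n G)) atTop)

/-- A good rate function: lower semicontinuous with compact sublevel sets. -/
def IsGoodRate {X : Type*} [TopologicalSpace X] (I : X → ℝ≥0∞) : Prop :=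
  LowerSemicontinuous I ∧ ∀ c : ℝ≥0∞, c ≠ ⊤ → IsCompact {x | I x ≤ c}

/-- The subdifferential of an extended-real-valued function on ℝ at a point. -/
def Subdiff (f : ℝ → EReal) (x : ℝ) : Set ℝ :=
  {k | ∀ y : ℝ, f x + ((k * (y - x) : ℝ) : EReal) ≤ f y}

/-- `(1/n) log x` as an extended real number. -/
noncomputable def expRate (n : ℕ) (x : ℝ≥0∞) : EReal :=
  (((n : ℝ)⁻¹ : ℝ) : EReal) * ENNReal.log x

/-- The action `W_n = -(1/n) log (dP/dQ)`. -/
noncomputable def action {Λ : Type*} [MeasurableSpace Λ]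
    (P Q : Measure Λ) (n : ℕ) (x : Λ) : ℝ :=
  -(n : ℝ)⁻¹ * Real.log ((P.rnDeriv Q) x).toReal

/-!
On the joint law of `z = (M, W)` under `Qₙ` the density `L` is `exp (-n w)`, so `E_Q[L^p; M ∈ B]` is
the Laplace integral of `φ (m, w) = p w` over `B × ℝ`, and its rate is `inf (φ + J_Q)` by Varadhan's
lemma. For the upper bound, the slab `φ ∈ [-K, K]` is cut into finitely many thin slices, each
controlled by the LDP; the part `φ > K` is at most `exp (-n K)`, and a moment of order `q > p` makes
the part `φ < -K` negligible.

The joint law under `Pₙ` is the law under `Qₙ` tilted by `exp (-n w)`, and conversely. Comparing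
the two LDPs on small neighbourhoods of a point therefore gives `J_P = w + J_Q` in both directions,
which turns one formula for the rate into the other.
-/

open ExpGrowth

lemma expRate_eq_log_div (n : ℕ) (x : ℝ≥0∞) : expRate n x = ENNReal.log x / n := by
  rw [expRate, mul_comm, EReal.div_eq_inv_mul, mul_comm, EReal.coe_inv, EReal.coe_natCast]

lemma biInf_eq_biInf_closure {X γ : Type*} [TopologicalSpace X] [CompleteLattice γ] {A : Set X}
    {f : X → γ} (hA : ⨅ x ∈ interior A, f x = ⨅ x ∈ closure A, f x) :
    ⨅ x ∈ A, f x = ⨅ x ∈ closure A, f x :=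
  ((biInf_mono interior_subset).trans_eq hA).antisymm (biInf_mono subset_closure)

lemma biInf_prod_univ {α β γ : Type*} [CompleteLattice γ] (s : Set α) (f : α × β → γ) :
    ⨅ z ∈ s ×ˢ univ, f z = ⨅ a ∈ s, ⨅ b, f (a, b) := by
  simp only [iInf_prod, mem_prod, mem_univ, and_true]
  exact iInf_congr fun a => iInf_comm

section LaplaceIntegral

variable {X : Type*} [MeasurableSpace X]

/-- The Laplace integral `∫_A exp (-n φ) dμₙ` of Varadhan's lemma. The weight takes values in
`ℝ≥0∞`, so the integral may be infinite. -/
noncomputable def laplaceIntegral (μ : ℕ → Measure X) (φ : X → ℝ) (A : Set X) (n : ℕ) : ℝ≥0∞ :=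
  ∫⁻ x in A, EReal.exp ((-φ x : ℝ) * n) ∂μ n

variable {μ : ℕ → Measure X} {φ ψ : X → ℝ} {A : Set X} {a : ℝ}

lemma laplaceIntegral_zero (μ : ℕ → Measure X) (A : Set X) :
    laplaceIntegral μ 0 A = fun n => μ n A := by
  ext n
  simp [laplaceIntegral]

lemma laplaceIntegral_mono (μ : ℕ → Measure X) (φ : X → ℝ) : Monotone (laplaceIntegral μ φ) :=
  fun _ _ hAB _ => lintegral_mono_set hAB

lemma laplaceIntegral_union_le (μ : ℕ → Measure X) (φ : X → ℝ) (A B : Set X) :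
    laplaceIntegral μ φ (A ∪ B) ≤ laplaceIntegral μ φ A + laplaceIntegral μ φ B :=
  fun _ => lintegral_union_le _ _ _

lemma laplaceIntegral_biUnion_le {ι : Type*} (μ : ℕ → Measure X) (φ : X → ℝ) (s : Finset ι)
    (A : ι → Set X) :
    laplaceIntegral μ φ (⋃ i ∈ s, A i) ≤ ∑ i ∈ s, laplaceIntegral μ φ (A i) := by
  classical
  induction s using Finset.induction_on with
  | empty => exact fun n => by simp [laplaceIntegral]
  | insert i t hit ih =>
    rw [Finset.set_biUnion_insert, Finset.sum_insert hit]
    exact (laplaceIntegral_union_le μ φ _ _).trans (add_le_add_right ih _)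

lemma laplaceIntegral_add_const (μ : ℕ → Measure X) (φ : X → ℝ) (a : ℝ) (A : Set X) :
    laplaceIntegral μ (fun x => φ x + a) A =
      (fun n : ℕ => EReal.exp ((-a : ℝ) * n)) * laplaceIntegral μ φ A := by
  ext n
  have hweight (x : X) : EReal.exp ((-(φ x + a) : ℝ) * n) =
      EReal.exp ((-a : ℝ) * n) * EReal.exp ((-φ x : ℝ) * n) := by
    rw [← EReal.exp_add]
    norm_cast
    ring_nf
  have hfinite : EReal.exp ((-a : ℝ) * n) ≠ ∞ :=
    EReal.exp_eq_top_iff.not.2 (by exact_mod_cast EReal.coe_ne_top (-a * n))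
  simp only [laplaceIntegral, hweight, Pi.mul_apply]
  exact lintegral_const_mul' _ _ hfinite

lemma laplaceIntegral_anti (hA : MeasurableSet A) (h : ∀ x ∈ A, φ x ≤ ψ x) :
    laplaceIntegral μ ψ A ≤ laplaceIntegral μ φ A := by
  intro n
  refine setLIntegral_mono' hA fun x hx => EReal.exp_monotone ?_
  have := h x hx
  gcongr

lemma expGrowthSup_laplaceIntegral_add_const (μ : ℕ → Measure X) (φ : X → ℝ) (a : ℝ) (A : Set X) :
    expGrowthSup (laplaceIntegral μ (fun x => φ x + a) A) ≤
      (-a : ℝ) + expGrowthSup (laplaceIntegral μ φ A) := by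
  rw [laplaceIntegral_add_const]
  refine (expGrowthSup_mul_le ?_ ?_).trans_eq ?_ <;> rw [expGrowthSup_exp]
  · exact .inl (EReal.coe_ne_bot _)
  · exact .inl (EReal.coe_ne_top _)

lemma expGrowthSup_laplaceIntegral_le_of_add_le (hA : MeasurableSet A)
    (h : ∀ x ∈ A, φ x + a ≤ ψ x) :
    expGrowthSup (laplaceIntegral μ ψ A) ≤ (-a : ℝ) + expGrowthSup (laplaceIntegral μ φ A) :=
  (expGrowthSup_monotone (laplaceIntegral_anti hA h)).trans
    (expGrowthSup_laplaceIntegral_add_const μ φ a A)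

lemma expGrowthSup_laplaceIntegral_le_of_le (hA : MeasurableSet A) (h : ∀ x ∈ A, a ≤ φ x) :
    expGrowthSup (laplaceIntegral μ φ A) ≤ (-a : ℝ) + expGrowthSup fun n => μ n A := by
  rw [← laplaceIntegral_zero]
  exact expGrowthSup_laplaceIntegral_le_of_add_le hA fun x hx => by simpa using h x hx

lemma le_expGrowthInf_laplaceIntegral_of_le (hA : MeasurableSet A) (h : ∀ x ∈ A, φ x ≤ a) :
    (-a : ℝ) + expGrowthInf (fun n => μ n A) ≤ expGrowthInf (laplaceIntegral μ φ A) := by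
  have hconst : laplaceIntegral μ (fun x => (0 : X → ℝ) x + a) A ≤ laplaceIntegral μ φ A :=
    laplaceIntegral_anti hA fun x hx => by simpa using h x hx
  rw [laplaceIntegral_add_const, laplaceIntegral_zero] at hconst
  refine le_trans ?_ (le_expGrowthInf_mul.trans (expGrowthInf_monotone hconst))
  rw [expGrowthInf_exp]

lemma expGrowthSup_laplaceIntegral_inter_Iic_le (hA : MeasurableSet A) (hφ : Measurable φ)
    {q : ℝ} (hq : 1 ≤ q) (K : ℝ) :
    expGrowthSup (laplaceIntegral μ φ (A ∩ φ ⁻¹' Iic (-K))) ≤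
      (-((q - 1) * K) : ℝ) + expGrowthSup (laplaceIntegral μ (fun x => q * φ x) A) := by
  calc expGrowthSup (laplaceIntegral μ φ (A ∩ φ ⁻¹' Iic (-K)))
      ≤ (-((q - 1) * K) : ℝ) +
          expGrowthSup (laplaceIntegral μ (fun x => q * φ x) (A ∩ φ ⁻¹' Iic (-K))) := by
        refine expGrowthSup_laplaceIntegral_le_of_add_le (hA.inter (hφ measurableSet_Iic)) ?_
        intro x hx
        have : φ x ≤ -K := hx.2
        nlinarith
    _ ≤ _ := by
        gcongr
        exact expGrowthSup_monotone (laplaceIntegral_mono μ _ inter_subset_left)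

end LaplaceIntegral

lemma subset_biUnion_slices {X : Type*} (φ : X → ℝ) {ε : ℝ} (hε : 0 < ε) (K L : ℝ) :
    φ ⁻¹' Icc K L ⊆ ⋃ k ∈ Finset.Icc ⌊K / ε⌋ ⌊L / ε⌋, φ ⁻¹' Icc (k * ε) ((k + 1) * ε) := by
  intro x hx
  refine mem_biUnion (x := ⌊φ x / ε⌋) (Finset.mem_Icc.2 ⟨?_, ?_⟩) ⟨?_, ?_⟩
  · have := hx.1
    gcongr
  · have := hx.2
    gcongr
  · exact (le_div_iff₀ hε).1 (Int.floor_le _)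
  · exact (div_le_iff₀ hε).1 (Int.lt_floor_add_one _).le

section Varadhan

variable {X : Type*} [TopologicalSpace X] [MeasurableSpace X]
  {μ : ℕ → Measure X} {J : X → ℝ≥0∞} {φ : X → ℝ} {A F G : Set X}

lemma SatisfiesLDP.expGrowthSup_le (hμ : SatisfiesLDP μ J) (hF : IsClosed F) :
    expGrowthSup (fun n => μ n F) ≤ -⨅ x ∈ F, (J x : EReal) := by
  simpa only [expGrowthSup, ← expRate_eq_log_div, expRate] using hμ.1 F hF

lemma SatisfiesLDP.le_expGrowthInf (hμ : SatisfiesLDP μ J) (hG : IsOpen G) :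
    -(⨅ x ∈ G, (J x : EReal)) ≤ expGrowthInf fun n => μ n G := by
  simpa only [expGrowthInf, ← expRate_eq_log_div, expRate] using hμ.2 G hG

lemma SatisfiesLDP.expGrowthSup_nonpos (hμ : SatisfiesLDP μ J) (A : Set X) :
    expGrowthSup (fun n => μ n A) ≤ 0 := by
  calc expGrowthSup (fun n => μ n A)
      ≤ expGrowthSup (fun n => μ n univ) :=
        expGrowthSup_monotone fun n => measure_mono (subset_univ A)
    _ ≤ -⨅ x ∈ univ, (J x : EReal) := hμ.expGrowthSup_le isClosed_univ
    _ ≤ 0 := EReal.neg_le_zero.2 (le_iInf₂ fun x _ => EReal.coe_ennreal_nonneg (J x))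

lemma SatisfiesLDP.expGrowthSup_laplaceIntegral_inter_Ici_le (hμ : SatisfiesLDP μ J)
    (hA : MeasurableSet A) (hφ : Measurable φ) (K : ℝ) :
    expGrowthSup (laplaceIntegral μ φ (A ∩ φ ⁻¹' Ici K)) ≤ (-K : ℝ) := by
  calc expGrowthSup (laplaceIntegral μ φ (A ∩ φ ⁻¹' Ici K))
      ≤ (-K : ℝ) + expGrowthSup fun n => μ n (A ∩ φ ⁻¹' Ici K) :=
        expGrowthSup_laplaceIntegral_le_of_le (hA.inter (hφ measurableSet_Ici)) fun x hx => hx.2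
    _ ≤ (-K : ℝ) + 0 := by
        gcongr
        exact hμ.expGrowthSup_nonpos _
    _ = (-K : ℝ) := add_zero _

theorem SatisfiesLDP.expGrowthSup_laplaceIntegral_lt_top (hμ : SatisfiesLDP μ J)
    (hA : MeasurableSet A) (hφ : Measurable φ) {q : ℝ} (hq : 1 ≤ q)
    (hmom : expGrowthSup (laplaceIntegral μ (fun x => q * φ x) A) < ⊤) :
    expGrowthSup (laplaceIntegral μ φ A) < ⊤ := by
  have hcover : A ⊆ A ∩ φ ⁻¹' Iic (-0) ∪ A ∩ φ ⁻¹' Ici 0 := fun x hx => by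
    simpa [hx] using le_total (φ x) 0
  refine (expGrowthSup_monotone ((laplaceIntegral_mono μ φ hcover).trans
    (laplaceIntegral_union_le μ φ _ _))).trans_lt ?_
  rw [expGrowthSup_add]
  refine max_lt ?_ ?_
  · refine (expGrowthSup_laplaceIntegral_inter_Iic_le hA hφ hq 0).trans_lt ?_
    simpa using hmom
  · exact (hμ.expGrowthSup_laplaceIntegral_inter_Ici_le hA hφ 0).trans_lt (EReal.coe_lt_top _)

variable [OpensMeasurableSpace X]

theorem SatisfiesLDP.le_expGrowthInf_laplaceIntegral (hμ : SatisfiesLDP μ J) (hG : IsOpen G)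
    (hφ : UpperSemicontinuous φ) :
    -(⨅ x ∈ G, ((φ x : EReal) + J x)) ≤ expGrowthInf (laplaceIntegral μ φ G) := by
  refine EReal.neg_le_of_neg_le (le_iInf₂ fun x hx => EReal.le_of_forall_lt_iff_le.1 fun c hc => ?_)
  obtain ⟨j, hj⟩ : ∃ j : ℝ, (J x : EReal) = j := by
    refine ⟨(J x).toReal, (EReal.coe_ennreal_toReal fun htop => ?_).symm⟩
    simp [htop] at hc
  rw [hj, ← EReal.coe_add, EReal.coe_lt_coe_iff] at hc
  set U := G ∩ φ ⁻¹' Iio (c - j)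
  have hUopen : IsOpen U := hG.inter (hφ.isOpen_preimage (c - j))
  refine EReal.neg_le_of_neg_le ?_
  calc -(c : EReal) = (-(c - j) : ℝ) + -(J x : EReal) := by
        rw [hj]
        norm_cast
        ring
    _ ≤ (-(c - j) : ℝ) + -(⨅ y ∈ U, (J y : EReal)) := by
        gcongr
        exact EReal.neg_le_neg_iff.2 (iInf₂_le x ⟨hx, lt_sub_iff_add_lt.2 hc⟩)
    _ ≤ (-(c - j) : ℝ) + expGrowthInf (fun n => μ n U) := by
        gcongr
        exact hμ.le_expGrowthInf hUopen
    _ ≤ expGrowthInf (laplaceIntegral μ φ U) :=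
        le_expGrowthInf_laplaceIntegral_of_le hUopen.measurableSet fun y hy => le_of_lt hy.2
    _ ≤ expGrowthInf (laplaceIntegral μ φ G) :=
        expGrowthInf_monotone (laplaceIntegral_mono μ φ inter_subset_left)

lemma SatisfiesLDP.expGrowthSup_laplaceIntegral_slice_le (hμ : SatisfiesLDP μ J) (hF : IsClosed F)
    (hφ : LowerSemicontinuous φ) {r : ℝ} (hr : ∀ x ∈ F, (r : EReal) ≤ φ x + (J x : EReal))
    (a b : ℝ) :
    expGrowthSup (laplaceIntegral μ φ (F ∩ φ ⁻¹' Icc a b)) ≤ (b - a - r : ℝ) := by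
  have hsublevel : IsClosed (F ∩ φ ⁻¹' Iic b) := hF.inter (hφ.isClosed_preimage b)
  have hrate : ((r - b : ℝ) : EReal) ≤ ⨅ x ∈ F ∩ φ ⁻¹' Iic b, (J x : EReal) := by
    refine le_iInf₂ fun x hx => ?_
    rw [EReal.coe_sub]
    refine EReal.sub_le_of_le_add' ((hr x hx.1).trans ?_)
    gcongr
    exact hx.2
  calc expGrowthSup (laplaceIntegral μ φ (F ∩ φ ⁻¹' Icc a b))
      ≤ (-a : ℝ) + expGrowthSup fun n => μ n (F ∩ φ ⁻¹' Icc a b) :=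
        expGrowthSup_laplaceIntegral_le_of_le
          (hF.measurableSet.inter (hφ.measurable measurableSet_Icc)) fun x hx => hx.2.1
    _ ≤ (-a : ℝ) + expGrowthSup fun n => μ n (F ∩ φ ⁻¹' Iic b) := by
        gcongr
        exact expGrowthSup_monotone fun n =>
          measure_mono (inter_subset_inter_right F (preimage_mono Icc_subset_Iic_self))
    _ ≤ (-a : ℝ) + -((r - b : ℝ) : EReal) := by
        gcongr
        exact (hμ.expGrowthSup_le hsublevel).trans (EReal.neg_le_neg_iff.2 hrate)
    _ = (b - a - r : ℝ) := by
        norm_cast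
        ring

lemma SatisfiesLDP.expGrowthSup_laplaceIntegral_inter_Icc_le (hμ : SatisfiesLDP μ J)
    (hF : IsClosed F) (hφ : LowerSemicontinuous φ) {r : ℝ}
    (hr : ∀ x ∈ F, (r : EReal) ≤ φ x + (J x : EReal)) (K L : ℝ) :
    expGrowthSup (laplaceIntegral μ φ (F ∩ φ ⁻¹' Icc K L)) ≤ (-r : ℝ) := by
  refine EReal.le_of_forall_lt_iff_le.1 fun c hc => ?_
  have hε : 0 < c + r := by linarith [EReal.coe_lt_coe_iff.1 hc]
  set ε := c + r
  set s := Finset.Icc ⌊K / ε⌋ ⌊L / ε⌋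
  set slice : ℤ → Set X := fun k => F ∩ φ ⁻¹' Icc (k * ε) ((k + 1) * ε)
  have hcover : F ∩ φ ⁻¹' Icc K L ⊆ ⋃ k ∈ s, slice k := by
    rw [← inter_iUnion₂]
    exact inter_subset_inter_right F (subset_biUnion_slices φ hε K L)
  calc expGrowthSup (laplaceIntegral μ φ (F ∩ φ ⁻¹' Icc K L))
      ≤ expGrowthSup (∑ k ∈ s, laplaceIntegral μ φ (slice k)) :=
        expGrowthSup_monotone
          ((laplaceIntegral_mono μ φ hcover).trans (laplaceIntegral_biUnion_le μ φ s slice))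
    _ = ⨆ k ∈ s, expGrowthSup (laplaceIntegral μ φ (slice k)) := expGrowthSup_sum _ _
    _ ≤ c := iSup₂_le fun k _ =>
        (hμ.expGrowthSup_laplaceIntegral_slice_le hF hφ hr _ _).trans_eq
          (congrArg _ (by ring))

theorem SatisfiesLDP.expGrowthSup_laplaceIntegral_le (hμ : SatisfiesLDP μ J) (hF : IsClosed F)
    (hφ : LowerSemicontinuous φ) {q : ℝ} (hq : 1 < q)
    (hmom : expGrowthSup (laplaceIntegral μ (fun x => q * φ x) F) < ⊤) :
    expGrowthSup (laplaceIntegral μ φ F) ≤ -⨅ x ∈ F, ((φ x : EReal) + J x) := by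
  refine EReal.le_neg_of_le_neg (EReal.ge_of_forall_gt_iff_ge.1 fun r hr => ?_)
  have hrate : ∀ x ∈ F, (r : EReal) ≤ φ x + (J x : EReal) := le_iInf₂_iff.1 hr.le
  obtain ⟨C, hC, -⟩ := EReal.lt_iff_exists_real_btwn.1 hmom
  -- `K` is so large that both tails `φ ≤ -K` and `K ≤ φ` decay at rate at least `r`.
  set K := max ((C + r) / (q - 1)) r
  have hK : C + r ≤ (q - 1) * K := by
    rw [mul_comm, ← div_le_iff₀ (sub_pos.2 hq)]
    exact le_max_left _ _
  have hcover : F ⊆ F ∩ φ ⁻¹' Iic (-K) ∪ (F ∩ φ ⁻¹' Icc (-K) K ∪ F ∩ φ ⁻¹' Ici K) := by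
    intro x hx
    rcases le_total (φ x) (-K) with h | h <;> rcases le_total (φ x) K with h' | h' <;>
      simp [hx, h, h']
  refine EReal.le_neg_of_le_neg ?_
  calc expGrowthSup (laplaceIntegral μ φ F)
      ≤ expGrowthSup (laplaceIntegral μ φ (F ∩ φ ⁻¹' Iic (-K)) +
          (laplaceIntegral μ φ (F ∩ φ ⁻¹' Icc (-K) K) +
            laplaceIntegral μ φ (F ∩ φ ⁻¹' Ici K))) :=
        expGrowthSup_monotone <| (laplaceIntegral_mono μ φ hcover).trans <|
          (laplaceIntegral_union_le μ φ _ _).trans <|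
            add_le_add_right (laplaceIntegral_union_le μ φ _ _) _
    _ ≤ (-r : ℝ) := by
        rw [expGrowthSup_add, expGrowthSup_add]
        refine max_le ?lower (max_le ?middle ?upper)
        case lower =>
          refine (expGrowthSup_laplaceIntegral_inter_Iic_le hF.measurableSet hφ.measurable
            hq.le K).trans ((add_le_add_right hC.le _).trans ?_)
          rw [← EReal.coe_add, EReal.coe_le_coe_iff]
          linarith
        case middle => exact hμ.expGrowthSup_laplaceIntegral_inter_Icc_le hF hφ hrate _ _
        case upper =>
          refine (hμ.expGrowthSup_laplaceIntegral_inter_Ici_le hF.measurableSet hφ.measurable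
            K).trans (EReal.coe_le_coe_iff.2 (neg_le_neg (le_max_right _ _)))

theorem SatisfiesLDP.tendsto_neg_expRate_laplaceIntegral (hμ : SatisfiesLDP μ J)
    (hφ : Continuous φ) {q : ℝ} (hq : 1 < q)
    (hmom : expGrowthSup (laplaceIntegral μ (fun x => q * φ x) (closure A)) < ⊤)
    (hA : ⨅ x ∈ interior A, ((φ x : EReal) + J x) = ⨅ x ∈ closure A, ((φ x : EReal) + J x)) :
    Tendsto (fun n => -expRate n (laplaceIntegral μ φ A n)) atTop
      (𝓝 (⨅ x ∈ A, ((φ x : EReal) + J x))) := by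
  have hinf := biInf_eq_biInf_closure hA
  have hlower : -(⨅ x ∈ A, ((φ x : EReal) + J x)) ≤ expGrowthInf (laplaceIntegral μ φ A) := by
    rw [hinf, ← hA]
    exact (hμ.le_expGrowthInf_laplaceIntegral isOpen_interior hφ.upperSemicontinuous).trans
      (expGrowthInf_monotone (laplaceIntegral_mono μ φ interior_subset))
  have hupper : expGrowthSup (laplaceIntegral μ φ A) ≤ -⨅ x ∈ A, ((φ x : EReal) + J x) := by
    rw [hinf]
    exact (expGrowthSup_monotone (laplaceIntegral_mono μ φ subset_closure)).trans
      (hμ.expGrowthSup_laplaceIntegral_le isClosed_closure hφ.lowerSemicontinuous hq hmom)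
  simp only [expRate_eq_log_div]
  have hlim := tendsto_of_le_liminf_of_limsup_le hlower hupper
  simpa using hlim.neg

theorem SatisfiesLDP.iInf_add_rate_ne_bot (hμ : SatisfiesLDP μ J) (hG : IsOpen G)
    (hφ : UpperSemicontinuous φ) {q : ℝ} (hq : 1 ≤ q)
    (hmom : expGrowthSup (laplaceIntegral μ (fun x => q * φ x) G) < ⊤) :
    ⨅ x ∈ G, ((φ x : EReal) + J x) ≠ ⊥ := by
  intro hbot
  have hgrowth := hμ.le_expGrowthInf_laplaceIntegral hG hφ
  rw [hbot, EReal.neg_bot, top_le_iff] at hgrowth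
  have hfinite := hμ.expGrowthSup_laplaceIntegral_lt_top hG.measurableSet hφ.measurable hq hmom
  exact (expGrowthInf_le_expGrowthSup.trans_lt hfinite).ne hgrowth

end Varadhan

section ChangeOfMeasure

lemma withDensity_exp_neg_mul_withDensity_exp_mul {X : Type*} [MeasurableSpace X] (μ : Measure X)
    {φ : X → ℝ} (hφ : Measurable φ) (n : ℕ) :
    (μ.withDensity fun x => EReal.exp ((-φ x : ℝ) * n)).withDensity
      (fun x => EReal.exp ((-(-φ) x : ℝ) * n)) = μ := by
  have hinv (x : X) : EReal.exp ((-(-φ) x : ℝ) * n) = (EReal.exp ((-φ x : ℝ) * n))⁻¹ := by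
    rw [← EReal.exp_neg, Pi.neg_apply, ← EReal.neg_mul, ← EReal.coe_neg]
  have hreal (x : X) : ((-φ x : ℝ) * n : EReal) = (-φ x * n : ℝ) := by norm_cast
  simp only [hinv]
  refine withDensity_inv_same (by fun_prop) (.of_forall fun x => ?_) (.of_forall fun x => ?_)
  · rw [hreal]
    exact EReal.exp_eq_zero_iff.not.2 (EReal.coe_ne_bot _)
  · rw [hreal]
    exact EReal.exp_eq_top_iff.not.2 (EReal.coe_ne_top _)

variable {X : Type*} [TopologicalSpace X] [RegularSpace X] [MeasurableSpace X]
  [OpensMeasurableSpace X] {μ ν : ℕ → Measure X} {I J : X → ℝ≥0∞} {φ : X → ℝ}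

theorem SatisfiesLDP.rate_le_of_withDensity (hν : SatisfiesLDP ν I) (hI : LowerSemicontinuous I)
    (hμ : SatisfiesLDP μ J) (hφ : UpperSemicontinuous φ)
    (hdens : ∀ᶠ n : ℕ in atTop, ν n = (μ n).withDensity fun x => EReal.exp ((-φ x : ℝ) * n))
    (x : X) :
    (I x : EReal) ≤ φ x + J x := by
  refine EReal.ge_of_forall_gt_iff_ge.1 fun t ht => ?_
  have hI' : LowerSemicontinuous fun y => (I y : EReal) :=
    continuous_coe_ennreal_ereal.comp_lowerSemicontinuous hI fun _ _ h =>
      EReal.coe_ennreal_le_coe_ennreal_iff.2 h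
  obtain ⟨C, hCx, hCclosed, hCI⟩ := exists_mem_nhds_isClosed_subset (hI' x t ht)
  have hν_interior : laplaceIntegral μ φ (interior C) =ᶠ[atTop] fun n => ν n (interior C) := by
    filter_upwards [hdens] with n hn
    rw [hn, withDensity_apply _ isOpen_interior.measurableSet, laplaceIntegral]
  refine EReal.neg_le_neg_iff.1 ?_
  calc -((φ x : EReal) + J x)
      ≤ -⨅ y ∈ interior C, ((φ y : EReal) + J y) :=
        EReal.neg_le_neg_iff.2 (iInf₂_le x (mem_interior_iff_mem_nhds.2 hCx))
    _ ≤ expGrowthInf (laplaceIntegral μ φ (interior C)) :=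
        hμ.le_expGrowthInf_laplaceIntegral isOpen_interior hφ
    _ = expGrowthInf fun n => ν n (interior C) := expGrowthInf_congr hν_interior
    _ ≤ expGrowthSup fun n => ν n (interior C) := expGrowthInf_le_expGrowthSup
    _ ≤ expGrowthSup fun n => ν n C :=
        expGrowthSup_monotone fun n => measure_mono interior_subset
    _ ≤ -⨅ y ∈ C, (I y : EReal) := hν.expGrowthSup_le hCclosed
    _ ≤ -(t : EReal) := EReal.neg_le_neg_iff.2 (le_iInf₂ fun y hy => (hCI hy).le)

theorem SatisfiesLDP.rate_eq_of_withDensity (hν : SatisfiesLDP ν I) (hI : LowerSemicontinuous I)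
    (hμ : SatisfiesLDP μ J) (hJ : LowerSemicontinuous J) (hφ : Continuous φ)
    (hdens : ∀ᶠ n : ℕ in atTop, ν n = (μ n).withDensity fun x => EReal.exp ((-φ x : ℝ) * n))
    (x : X) :
    (I x : EReal) = φ x + J x := by
  have hdens' : ∀ᶠ n : ℕ in atTop,
      μ n = (ν n).withDensity fun x => EReal.exp ((-(-φ) x : ℝ) * n) := by
    filter_upwards [hdens] with n hn
    rw [hn, withDensity_exp_neg_mul_withDensity_exp_mul _ hφ.measurable]
  refine (hν.rate_le_of_withDensity hI hμ hφ.upperSemicontinuous hdens x).antisymm ?_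
  calc (φ x : EReal) + J x
      ≤ φ x + (((-φ) x : ℝ) + I x) := by
        gcongr
        exact hμ.rate_le_of_withDensity hJ hν hφ.neg.upperSemicontinuous hdens' x
    _ = I x := by
        rw [← add_assoc, ← EReal.coe_add, Pi.neg_apply, add_neg_cancel, EReal.coe_zero, zero_add]

end ChangeOfMeasure

lemma SatisfiesLDP.exists_rate_ne_top_of_map {X Y : Type*} [TopologicalSpace X] [MeasurableSpace X]
    [TopologicalSpace Y] [MeasurableSpace Y] [OpensMeasurableSpace Y] {μ : ℕ → Measure X}
    {J : X → ℝ≥0∞} {I : Y → ℝ≥0∞} {f : X → Y} {A : Set Y} (hμ : SatisfiesLDP μ J)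
    (hmap : SatisfiesLDP (fun n => (μ n).map f) I) (hf : Continuous f) (hf' : Measurable f)
    (hA : ∃ y ∈ interior A, I y ≠ ⊤) :
    ∃ x, f x ∈ closure A ∧ J x ≠ ⊤ := by
  obtain ⟨y, hyA, hy⟩ := hA
  by_contra! htop
  have hgrowth : -(I y : EReal) ≤ ⊥ :=
    calc -(I y : EReal)
        ≤ -⨅ z ∈ interior A, (I z : EReal) := EReal.neg_le_neg_iff.2 (iInf₂_le y hyA)
      _ ≤ expGrowthInf fun n => (μ n).map f (interior A) := hmap.le_expGrowthInf isOpen_interior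
      _ ≤ expGrowthSup fun n => (μ n).map f (interior A) := expGrowthInf_le_expGrowthSup
      _ ≤ expGrowthSup fun n => μ n (f ⁻¹' closure A) := expGrowthSup_monotone fun n => by
          rw [Measure.map_apply hf' isOpen_interior.measurableSet]
          exact measure_mono (preimage_mono (interior_subset.trans subset_closure))
      _ ≤ -⨅ x ∈ f ⁻¹' closure A, (J x : EReal) :=
          hμ.expGrowthSup_le (isClosed_closure.preimage hf)
      _ ≤ ⊥ := by simp +contextual [htop]
  simp [hy] at hgrowth

section Action

variable {Λ : Type*} [MeasurableSpace Λ]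

lemma measurable_action (P Q : Measure Λ) (n : ℕ) : Measurable (action P Q n) := by
  unfold action
  fun_prop

variable {P Q : Measure Λ} [SigmaFinite P] [SigmaFinite Q] {n : ℕ}

lemma rnDeriv_ae_eq_exp_neg_action_mul (hQP : Q ≪ P) (hn : n ≠ 0) :
    P.rnDeriv Q =ᵐ[Q] fun x => EReal.exp ((-action P Q n x : ℝ) * n) := by
  filter_upwards [Measure.rnDeriv_pos' hQP, P.rnDeriv_lt_top Q] with x hpos hfinite
  have hlog : -action P Q n x * n = Real.log (P.rnDeriv Q x).toReal := by
    rw [action]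
    field_simp
  rw [← EReal.coe_natCast, ← EReal.coe_mul, hlog,
    ← ENNReal.log_pos_real hpos.ne' hfinite.ne, ENNReal.exp_log]

variable {E : Type*} [MeasurableSpace E] {M : Λ → E}

lemma setLIntegral_rnDeriv_rpow_eq_setLIntegral_map (hQP : Q ≪ P) (hn : n ≠ 0)
    (hM : Measurable M) {S : Set (E × ℝ)} (hS : MeasurableSet S) (p : ℝ) :
    ∫⁻ x in {x | (M x, action P Q n x) ∈ S}, P.rnDeriv Q x ^ p ∂Q =
      ∫⁻ z in S, EReal.exp ((-(p * z.2) : ℝ) * n) ∂Q.map fun x => (M x, action P Q n x) := by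
  have hZ : Measurable fun x => (M x, action P Q n x) := hM.prodMk (measurable_action P Q n)
  rw [setLIntegral_map hS (by fun_prop) hZ]
  refine lintegral_congr_ae (ae_restrict_of_ae ?_)
  filter_upwards [rnDeriv_ae_eq_exp_neg_action_mul hQP hn] with x hx
  rw [hx, ← EReal.exp_mul]
  congr 1
  norm_cast
  ring

lemma map_prodMk_action_eq_withDensity (hPQ : P ≪ Q) (hQP : Q ≪ P) (hn : n ≠ 0)
    (hM : Measurable M) :
    P.map (fun x => (M x, action P Q n x)) =
      (Q.map fun x => (M x, action P Q n x)).withDensity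
        fun z => EReal.exp ((-z.2 : ℝ) * n) := by
  ext S hS
  have hZ : Measurable fun x => (M x, action P Q n x) := hM.prodMk (measurable_action P Q n)
  calc P.map (fun x => (M x, action P Q n x)) S
      = P {x | (M x, action P Q n x) ∈ S} := Measure.map_apply hZ hS
    _ = ∫⁻ x in {x | (M x, action P Q n x) ∈ S}, P.rnDeriv Q x ^ (1 : ℝ) ∂Q := by
        simp only [ENNReal.rpow_one, Measure.setLIntegral_rnDeriv hPQ]
    _ = _ := by
        rw [setLIntegral_rnDeriv_rpow_eq_setLIntegral_map hQP hn hM hS, withDensity_apply _ hS]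
        simp only [one_mul]

end Action

section MomentRate

variable {E : Type*} [MeasurableSpace E] {Λ : ℕ → Type*} [∀ n, MeasurableSpace (Λ n)]
  {P Q : ∀ n, Measure (Λ n)} [∀ n, SigmaFinite (P n)] [∀ n, SigmaFinite (Q n)] {M : ∀ n, Λ n → E}

lemma laplaceIntegral_map_prodMk_action (hQP : ∀ n, Q n ≪ P n) (hM : ∀ n, Measurable (M n))
    {S : Set E} (hS : MeasurableSet S) (p : ℝ) :
    laplaceIntegral (fun n => (Q n).map fun x => (M n x, action (P n) (Q n) n x))
        (fun z => p * z.2) (S ×ˢ univ) =ᶠ[atTop]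
      fun n => ∫⁻ x in {x | M n x ∈ S}, (P n).rnDeriv (Q n) x ^ p ∂Q n := by
  filter_upwards [eventually_ne_atTop 0] with n hn
  simp only [laplaceIntegral, ← setLIntegral_rnDeriv_rpow_eq_setLIntegral_map (hQP n) hn (hM n)
    (hS.prod .univ), mem_prod, mem_univ, and_true]

lemma expGrowthSup_laplaceIntegral_map_prodMk_action (hQP : ∀ n, Q n ≪ P n)
    (hM : ∀ n, Measurable (M n)) {S : Set E} (hS : MeasurableSet S) (p : ℝ) :
    expGrowthSup (laplaceIntegral (fun n => (Q n).map fun x => (M n x, action (P n) (Q n) n x))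
        (fun z => p * z.2) (S ×ˢ univ)) =
      limsup (fun n => expRate n
        (∫⁻ x in {x | M n x ∈ S}, (P n).rnDeriv (Q n) x ^ p ∂Q n)) atTop := by
  rw [expGrowthSup_congr (laplaceIntegral_map_prodMk_action hQP hM hS p)]
  simp only [expGrowthSup, expRate_eq_log_div]

theorem rate_eq_action_add_rate [TopologicalSpace E] [RegularSpace E] [OpensMeasurableSpace E]
    (hPQ : ∀ n, P n ≪ Q n) (hQP : ∀ n, Q n ≪ P n) (hM : ∀ n, Measurable (M n))
    {J_P J_Q : E × ℝ → ℝ≥0∞}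
    (hLDP_P : SatisfiesLDP (fun n => (P n).map fun x => (M n x, action (P n) (Q n) n x)) J_P)
    (hLDP_Q : SatisfiesLDP (fun n => (Q n).map fun x => (M n x, action (P n) (Q n) n x)) J_Q)
    (hJ_P : LowerSemicontinuous J_P) (hJ_Q : LowerSemicontinuous J_Q) (z : E × ℝ) :
    (J_P z : EReal) = z.2 + J_Q z :=
  hLDP_P.rate_eq_of_withDensity hJ_P hLDP_Q hJ_Q continuous_snd
    ((eventually_ne_atTop 0).mono fun n hn =>
      map_prodMk_action_eq_withDensity (hPQ n) (hQP n) hn (hM n)) z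

theorem second_moment_rate_general [TopologicalSpace E] [RegularSpace E] [OpensMeasurableSpace E]
    (hPQ : ∀ n, P n ≪ Q n) (hQP : ∀ n, Q n ≪ P n) (hM : ∀ n, Measurable (M n))
    {B : Set E} (hB : MeasurableSet B) {p q : ℝ} (hp : 0 < p) (hpq : p < q)
    (hmom : limsup (fun n : ℕ => expRate n
      (∫⁻ x in {x | M n x ∈ closure B}, (P n).rnDeriv (Q n) x ^ q ∂Q n)) atTop < ⊤)
    {J_P J_Q : E × ℝ → ℝ≥0∞}
    (hLDP_P : SatisfiesLDP (fun n => (P n).map fun x => (M n x, action (P n) (Q n) n x)) J_P)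
    (hLDP_Q : SatisfiesLDP (fun n => (Q n).map fun x => (M n x, action (P n) (Q n) n x)) J_Q)
    (hJ_P : LowerSemicontinuous J_P) (hJ_Q : LowerSemicontinuous J_Q)
    (hfin : ∃ z : E × ℝ, z.1 ∈ closure B ∧ J_P z ≠ ⊤)
    (hBgood : ⨅ m ∈ interior B, ⨅ w : ℝ, (((p * w : ℝ) : EReal) + J_Q (m, w)) =
      ⨅ m ∈ closure B, ⨅ w : ℝ, (((p * w : ℝ) : EReal) + J_Q (m, w))) :
    ∃ R : EReal,
      Tendsto (fun n : ℕ => -expRate n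
        (∫⁻ x in {x | M n x ∈ B}, (P n).rnDeriv (Q n) x ^ p ∂Q n)) atTop (𝓝 R) ∧
      R ≠ ⊤ ∧ R ≠ ⊥ ∧
      R = (⨅ m ∈ B, ⨅ w : ℝ, ((((p - 1) * w : ℝ) : EReal) + J_P (m, w))) ∧
      R = ⨅ m ∈ B, ⨅ w : ℝ, (((p * w : ℝ) : EReal) + J_Q (m, w)) := by
  set law := fun n => (Q n).map fun x => (M n x, action (P n) (Q n) n x)
  set R := ⨅ z ∈ B ×ˢ univ, (((p * z.2 : ℝ) : EReal) + J_Q z)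
  have hq : 1 < q / p := (one_lt_div hp).2 hpq
  have hφ : Continuous fun z : E × ℝ => p * z.2 := by fun_prop
  have hmom' : expGrowthSup
      (laplaceIntegral law (fun z => q / p * (p * z.2)) (closure (B ×ˢ univ))) < ⊤ := by
    simp only [closure_prod_eq, closure_univ, ← mul_assoc, div_mul_cancel₀ q hp.ne']
    rwa [expGrowthSup_laplaceIntegral_map_prodMk_action hQP hM isClosed_closure.measurableSet]
  have hregular : ⨅ z ∈ interior (B ×ˢ univ), (((p * z.2 : ℝ) : EReal) + J_Q z) =
      ⨅ z ∈ closure (B ×ˢ univ), (((p * z.2 : ℝ) : EReal) + J_Q z) := by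
    simpa only [interior_prod_eq, interior_univ, closure_prod_eq, closure_univ, biInf_prod_univ]
      using hBgood
  have hinf : R = ⨅ z ∈ closure (B ×ˢ univ), (((p * z.2 : ℝ) : EReal) + J_Q z) :=
    biInf_eq_biInf_closure hregular
  have hshift (z : E × ℝ) :
      (((p - 1) * z.2 : ℝ) : EReal) + J_P z = ((p * z.2 : ℝ) : EReal) + J_Q z := by
    rw [rate_eq_action_add_rate hPQ hQP hM hLDP_P hLDP_Q hJ_P hJ_Q, ← add_assoc, ← EReal.coe_add]
    ring_nf
  refine ⟨R, ?tendsto, ?ne_top, ?ne_bot,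
    (biInf_congr fun z _ => (hshift z).symm).trans (biInf_prod_univ _ _), biInf_prod_univ _ _⟩
  case tendsto =>
    refine (hLDP_Q.tendsto_neg_expRate_laplaceIntegral hφ hq hmom' hregular).congr' ?_
    filter_upwards [laplaceIntegral_map_prodMk_action hQP hM hB p] with n hn
    rw [hn]
  case ne_top =>
    obtain ⟨z, hzB, hz⟩ := hfin
    have hzB' : z ∈ closure (B ×ˢ univ) := by simpa [closure_prod_eq] using hzB
    refine ne_top_of_le_ne_top ?_ (hinf.trans_le (iInf₂_le z hzB'))
    rw [← hshift]
    exact (EReal.add_lt_top (EReal.coe_ne_top _) (by simpa using hz)).ne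
  case ne_bot =>
    rw [hinf, ← hregular]
    refine hLDP_Q.iInf_add_rate_ne_bot isOpen_interior hφ.upperSemicontinuous hq.le
      (hmom'.trans_le' ?_)
    exact expGrowthSup_monotone (laplaceIntegral_mono _ _ (interior_subset.trans subset_closure))

end MomentRate

/-- Lemma 1: under Assumptions 1, 2 and 3, the second-moment decay rate
`R_Q(B) = lim -(1/n) log E_Q[L_n² 1_(M_n ∈ B)]` exists, is finite, and is given by
`inf_(m ∈ B, w) (w + J_P(m,w)) = inf_(m ∈ B, w) (2w + J_Q(m,w))`. -/
theorem second_moment_rate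
    {D : ℕ} {Λ : ℕ → Type*} [∀ n, MeasurableSpace (Λ n)]
    (P Q : ∀ n, Measure (Λ n))
    [∀ n, IsProbabilityMeasure (P n)] [∀ n, IsProbabilityMeasure (Q n)]
    (habs : ∀ n, P n ≪ Q n ∧ Q n ≪ P n)
    (M : ∀ n, Λ n → (Fin D → ℝ)) (hM : ∀ n, Measurable (M n))
    (B : Set (Fin D → ℝ)) (hB : MeasurableSet B)
    (I_P : (Fin D → ℝ) → ℝ≥0∞)
    (hLDP_M : SatisfiesLDP (fun n => (P n).map (M n)) I_P)
    (hIPgood : IsGoodRate I_P)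
    (hIPB : (⨅ m ∈ interior B, I_P m) = ⨅ m ∈ closure B, I_P m)
    (hIPBfin : (⨅ m ∈ closure B, I_P m) ≠ ⊤)
    (δ : ℝ) (hδ : 0 < δ)
    (hmom : limsup (fun n : ℕ => expRate n
        (∫⁻ x in {x | M n x ∈ closure B},
          ((P n).rnDeriv (Q n) x) ^ ((2 : ℝ) + δ) ∂(Q n))) atTop < ⊤)
    (J_P J_Q : (Fin D → ℝ) × ℝ → ℝ≥0∞)
    (hLDP_P : SatisfiesLDP (fun n => (P n).map (fun x => (M n x, action (P n) (Q n) n x))) J_P)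
    (hLDP_Q : SatisfiesLDP (fun n => (Q n).map (fun x => (M n x, action (P n) (Q n) n x))) J_Q)
    (hJPgood : IsGoodRate J_P) (hJQgood : IsGoodRate J_Q)
    (hdom : {p | J_P p ≠ ⊤} = {p | J_Q p ≠ ⊤})
    (hne : {p | J_P p ≠ ⊤}.Nonempty)
    (hBgood : (⨅ m ∈ interior B, ⨅ w : ℝ, (((2 * w : ℝ) : EReal) + (J_Q (m, w) : EReal)))
      = ⨅ m ∈ closure B, ⨅ w : ℝ, (((2 * w : ℝ) : EReal) + (J_Q (m, w) : EReal)))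
    :
    ∃ R : EReal,
      Tendsto (fun n : ℕ => -expRate n (∫⁻ x in {x | M n x ∈ B}, ((P n).rnDeriv (Q n) x) ^ 2 ∂(Q n))) atTop (𝓝 R) ∧
      R ≠ ⊤ ∧ R ≠ ⊥ ∧
      R = (⨅ m ∈ B, ⨅ w : ℝ, ((w : EReal) + (J_P (m, w) : EReal))) ∧
      R = ⨅ m ∈ B, ⨅ w : ℝ, (((2 * w : ℝ) : EReal) + (J_Q (m, w) : EReal)) := by
  have hfin : ∃ z : (Fin D → ℝ) × ℝ, z.1 ∈ closure B ∧ J_P z ≠ ⊤ := by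
    refine hLDP_P.exists_rate_ne_top_of_map (f := Prod.fst) (I := I_P) ?_ continuous_fst
      measurable_fst ?_
    · simpa only [Measure.map_map measurable_fst ((hM _).prodMk (measurable_action _ _ _)),
        Function.comp_def] using hLDP_M
    · simpa [iInf_eq_top] using hIPB.trans_ne hIPBfin
  simpa only [ENNReal.rpow_ofNat, show (2 : ℝ) - 1 = 1 by norm_num, one_mul] using
    second_moment_rate_general (fun n => (habs n).1) (fun n => (habs n).2) hM hB two_pos
      (lt_add_of_pos_right 2 hδ) hmom hLDP_P hLDP_Q hJPgood.1 hJQgood.1 hfin hBgood
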